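/- The function V has increasing differences in (s₁, s₂): for all s₁, s₁' ∈ [0, P] and s₂, s₂' ∈ [−P, 0] with s₁ ≤ s₁' and s₂ ≤ s₂', one has V(s₁', s₂') − V(s₁, s₂') ≥ V(s₁', s₂) − V(s₁, s₂). (This is the supermodularity property of the reparametrized two-subchannel unknown-channel Gaussian interference game.) -/

import Mathlib

open MeasureTheory

lemma aux_log {d d' x x' : ℝ} (hd' : 0 < d') (hd : d' ≤ d) (hx : 0 ≤ x) (hx' : x ≤ x') :
    Real.log (1 + x' / d) - Real.log (1 + x / d) ≤
      Real.log (1 + x' / d') - Real.log (1 + x / d') := by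
  have h0 : 0 < d := lt_of_lt_of_le hd' hd
  have h1 : 0 ≤ x' := hx.trans hx'
  have p1 : 0 < 1 + x' / d := by positivity
  have p2 : 0 < 1 + x / d := by positivity
  have p3 : 0 < 1 + x' / d' := by positivity
  have p4 : 0 < 1 + x / d' := by positivity
  have key : Real.log ((1 + x' / d) * (1 + x / d')) ≤ Real.log ((1 + x' / d') * (1 + x / d)) := by
    apply Real.log_le_log (by positivity)
    have e : (1 + x' / d') * (1 + x / d) - (1 + x' / d) * (1 + x / d')
        = (d - d') * (x' - x) / (d * d') := by
      field_simp
      ring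
    have : 0 ≤ (d - d') * (x' - x) / (d * d') :=
      div_nonneg (mul_nonneg (by linarith) (by linarith)) (by positivity)
    linarith
  rw [Real.log_mul p1.ne' p4.ne', Real.log_mul p3.ne' p2.ne'] at key
  linarith

lemma aux_int {Ω : Type*} [MeasurableSpace Ω] (μ : Measure Ω) [IsProbabilityMeasure μ]
    (N₀ b s t : ℝ) (hN₀ : 0 < N₀) (g h : Ω → ℝ) (hg : Measurable g) (hh : Measurable h)
    (hg0 : ∀ ω, 0 ≤ g ω) (hgb : ∀ ω, g ω ≤ b) (hh0 : ∀ ω, 0 ≤ h ω) (hs : 0 ≤ s) (ht : 0 ≤ t) :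
    Integrable (fun ω => (1/2) * Real.log (1 + g ω * s / (N₀ + h ω * t))) μ := by
  apply Integrable.const_mul
  apply Integrable.of_bound (C := b * s / N₀)
  · apply Measurable.aestronglyMeasurable
    fun_prop
  · refine Filter.Eventually.of_forall fun ω => ?_
    have h1 := hg0 ω
    have h2 := hh0 ω
    have h3 : 0 ≤ g ω * s / (N₀ + h ω * t) := by positivity
    rw [Real.norm_of_nonneg (Real.log_nonneg (by linarith))]
    have h4 := Real.log_le_sub_one_of_pos (show 0 < 1 + g ω * s / (N₀ + h ω * t) by linarith)
    have h5 : g ω * s / (N₀ + h ω * t) ≤ b * s / N₀ := by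
      have h6 : 0 ≤ h ω * t := by positivity
      have h7 : 0 ≤ b := h1.trans (hgb ω)
      exact div_le_div₀ (by positivity) (mul_le_mul_of_nonneg_right (hgb ω) hs) hN₀ (by linarith)
    linarith

/-- The reparametrized payoff `V` of the two-subchannel unknown-channel Gaussian
interference game has increasing differences in `(s₁, s₂)` (supermodularity). -/
theorem stmt_19
    {Ω : Type*} [MeasurableSpace Ω] (μ : Measure Ω) [IsProbabilityMeasure μ]
    (P N₀ a b : ℝ) (hP : 0 < P) (hN₀ : 0 < N₀) (ha : 0 < a) (hab : a ≤ b)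
    (g11 g21 : Ω → ℝ) (hg11 : Measurable g11) (hg21 : Measurable g21)
    (hg11b : ∀ ω, a ≤ g11 ω ∧ g11 ω ≤ b) (hg21b : ∀ ω, a ≤ g21 ω ∧ g21 ω ≤ b)
    (V : ℝ → ℝ → ℝ)
    (hV : ∀ s₁ s₂, V s₁ s₂ =
      ∫ ω, ((1/2) * Real.log (1 + g11 ω * s₁ / (N₀ + g21 ω * (-s₂))) +
            (1/2) * Real.log (1 + g11 ω * (P - s₁) / (N₀ + g21 ω * (P + s₂)))) ∂μ) :
    ∀ s₁ ∈ Set.Icc (0:ℝ) P, ∀ s₁' ∈ Set.Icc (0:ℝ) P,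
      ∀ s₂ ∈ Set.Icc (-P) (0:ℝ), ∀ s₂' ∈ Set.Icc (-P) (0:ℝ),
        s₁ ≤ s₁' → s₂ ≤ s₂' →
          V s₁' s₂ - V s₁ s₂ ≤ V s₁' s₂' - V s₁ s₂' := by
  rintro s₁ ⟨h1, h1P⟩ s₁' ⟨h1', h1P'⟩ s₂ ⟨h2, h2P⟩ s₂' ⟨h2', h2P'⟩ h11 h22
  have g0 : ∀ ω, 0 ≤ g11 ω := fun ω => ha.le.trans (hg11b ω).1
  have k0 : ∀ ω, 0 ≤ g21 ω := fun ω => ha.le.trans (hg21b ω).1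
  have I : ∀ s t : ℝ, 0 ≤ s → s ≤ P → -P ≤ t → t ≤ 0 → Integrable (fun ω =>
      ((1/2) * Real.log (1 + g11 ω * s / (N₀ + g21 ω * (-t))) +
            (1/2) * Real.log (1 + g11 ω * (P - s) / (N₀ + g21 ω * (P + t))))) μ := by
    intro s t hs hsP ht htP
    exact (aux_int μ N₀ b s (-t) hN₀ g11 g21 hg11 hg21 g0 (fun ω => (hg11b ω).2) k0 hs
      (by linarith)).add
      (aux_int μ N₀ b (P - s) (P + t) hN₀ g11 g21 hg11 hg21 g0 (fun ω => (hg11b ω).2) k0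
        (by linarith) (by linarith))
  rw [hV, hV, hV, hV, ← integral_sub (I _ _ h1' h1P' h2 h2P) (I _ _ h1 h1P h2 h2P),
    ← integral_sub (I _ _ h1' h1P' h2' h2P') (I _ _ h1 h1P h2' h2P')]
  apply integral_mono ((I _ _ h1' h1P' h2 h2P).sub (I _ _ h1 h1P h2 h2P))
    ((I _ _ h1' h1P' h2' h2P').sub (I _ _ h1 h1P h2' h2P'))
  intro ω
  have hg := g0 ω
  have hk := k0 ω
  have q1 : 0 ≤ g21 ω * (-s₂') := mul_nonneg hk (by linarith)
  have q2 : 0 ≤ g21 ω * (P + s₂) := mul_nonneg hk (by linarith)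
  have A := aux_log (d := N₀ + g21 ω * (-s₂)) (d' := N₀ + g21 ω * (-s₂')) (x := g11 ω * s₁)
    (x' := g11 ω * s₁') (by linarith) (by nlinarith) (by positivity)
    (mul_le_mul_of_nonneg_left h11 hg)
  have B := aux_log (d := N₀ + g21 ω * (P + s₂')) (d' := N₀ + g21 ω * (P + s₂))
    (x := g11 ω * (P - s₁')) (x' := g11 ω * (P - s₁)) (by linarith) (by nlinarith)
    (mul_nonneg hg (by linarith)) (mul_le_mul_of_nonneg_left (by linarith) hg)
  simp only [Pi.sub_apply]
  linarith
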